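/- arXiv:1303.5559 — 3 statements merged into one kernel-verified Lean document; each statement's English description precedes it below -/
import Mathlib

section
/- Let F be a perfect field of characteristic 2. Then there exist a veronesean embedding ε' of the symplectic generalized quadrangle W(3,F) of dimension 14 and a surjective linear morphism f from ε' to the veronesean-spin embedding ε of W(3,F) in PG(F^10) whose kernel has dimension 4; in particular ε is a proper quotient of a 14-dimensional veronesean embedding of W(3,F). -/
open Cardinal

universe u v

/-- A non-singular conic in `PG(V)`: the image of the standard conic
`{⟨(s², st, t²)⟩}` of `PG(F³)` under the map induced by an injective linear map `F³ → V`. -/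
def IsConic (F : Type*) [Field F] {V : Type v} [AddCommGroup V] [Module F V]
    (C : Set (Submodule F V)) : Prop :=
  ∃ φ : (Fin 3 → F) →ₗ[F] V, Function.Injective φ ∧
    C = {p | ∃ s t : F, ¬(s = 0 ∧ t = 0) ∧
          p = Submodule.span F {φ ![s ^ 2, s * t, t ^ 2]}}

/-- A veronesean embedding of the point-line geometry `(P, L)` in `PG(V)`: an injective map
from points to 1-dimensional subspaces of `V`, mapping every line bijectively onto a
non-singular conic, with `ε(p) ∩ ⟨ε(l)⟩ = 0` for non-incident `(p,l)`, and whose image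
spans `V`. -/
structure VerEmb (F : Type*) [Field F] (P : Type*) (L : Set (Set P))
    (V : Type v) [AddCommGroup V] [Module F V] where
  toFun : P → Submodule F V
  point : ∀ p : P, ∃ w : V, w ≠ 0 ∧ toFun p = Submodule.span F {w}
  injective : Function.Injective toFun
  conic : ∀ l ∈ L, IsConic F (toFun '' l)
  disjoint_line : ∀ p : P, ∀ l ∈ L, p ∉ l → toFun p ⊓ (⨆ x ∈ l, toFun x) = ⊥
  spans : (⨆ p : P, toFun p) = ⊤

/-- `ε` (a map from points of `(P,L)` to points of `PG(V)`) is relatively universal: every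
morphism to `ε` from any veronesean embedding `ε'` of `(P,L)` — i.e. every surjective
`σ`-semilinear map `f` (with `σ` a field automorphism) carrying each `ε'(p)` onto `ε(p)` —
is injective. -/
def RelUniversal (F : Type*) [Field F] (P : Type*) (L : Set (Set P))
    (V : Type*) [AddCommGroup V] [Module F V] (ε : P → Submodule F V) : Prop :=
  ∀ (V' : Type u) [AddCommGroup V'] [Module F V'], ∀ (ε' : VerEmb F P L V')
    (σ : F →+* F), Function.Bijective σ → ∀ f : V' →ₛₗ[σ] V,
      Function.Surjective f → (∀ p : P, f '' (ε'.toFun p : Set V') = (ε p : Set V)) →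
      Function.Injective f

/-- The alternating form `α(x,y) = x₁y₄ + x₂y₃ + x₃y₂ + x₄y₁` on `F⁴` (indices `0,…,3`). -/
def alphaForm (F : Type*) [Field F] (x y : Fin 4 → F) : F :=
  x 0 * y 3 + x 1 * y 2 + x 2 * y 1 + x 3 * y 0

/-- The quadric veronesean map `ν₄ : F⁴ → F^10`, `x ↦ (x_i x_j)_{i ≤ j}`, with the ten
coordinates indexed by unordered pairs from `Fin 4`. -/
def nu4 (F : Type*) [Field F] (x : Fin 4 → F) : Sym2 (Fin 4) → F :=
  Sym2.lift ⟨fun i j => x i * x j, fun _ _ => mul_comm _ _⟩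

/-- The points of the symplectic generalized quadrangle `W(3,F)`:
the 1-dimensional subspaces of `F⁴`. -/
def SPoint (F : Type*) [Field F] :=
  {W : Submodule F (Fin 4 → F) // Module.finrank F ↥W = 1}

/-- The lines of `W(3,F)`: point sets of the totally `α`-isotropic 2-subspaces of `F⁴`. -/
def SLines (F : Type*) [Field F] : Set (Set (SPoint F)) :=
  {S | ∃ W : Submodule F (Fin 4 → F), Module.finrank F ↥W = 2 ∧
    (∀ x ∈ W, ∀ y ∈ W, alphaForm F x y = 0) ∧ S = {p : SPoint F | p.1 ≤ W}}

/-- The veronesean-spin embedding of `W(3,F)` in `PG(F^10)`: `⟨x⟩ ↦ ⟨ν₄(x)⟩`. -/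
def epsVS (F : Type*) [Field F] (p : SPoint F) : Submodule F (Sym2 (Fin 4) → F) :=
  Submodule.span F (nu4 F '' (p.1 : Set (Fin 4 → F)))

/-! Let `q = x₀x₃ + x₁x₂`, a quadratic form whose polar form is `α`. In characteristic 2 its square
root `√q` is linear on every totally `α`-isotropic subspace, so `x ↦ (x_i x_j)_{i ≤ j}` can be
extended by the four functions `x_i √q(x)`, which are again quadratic along the lines of `W(3,F)`;
equivalently, one maps `W(3,F)` to the parabolic quadric `y² = x₀x₃ + x₁x₂` of `PG(4,F)` and applies
the quadric veronesean map, on which `y²` has become redundant. Injectivity, disjointness and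
non-degeneracy of the conics are detected by the products `g h` of linear functionals `g`, `h`,
which factor through the veronesean coordinates already. The images span because a relation
`Q(x) + √q(x) ℓ(x) = 0`, with `Q` quadratic and `ℓ` linear, forces `ℓ(z) = 0`: take third
differences at a hyperbolic pair `x`, `y` orthogonal to `z`.
-/

open Module Submodule
open QuadraticMap (polar polar_add_left polar_smul_left polar_smul_right linMulLin linMulLin_apply)

section QuadraticAlongLines

variable {R V V' : Type*} [CommRing R] [AddCommGroup V'] [Module R V'] [AddCommGroup V] [Module R V]

/-- The products of two linear functionals on `V` factor through linear functionals along
`w : V → V'`. This is a coordinate-free way of saying that some linear map carries `w` to the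
quadric veronesean map of `V`. -/
def FactorsProducts (R : Type*) {V V' : Type*} [CommRing R] [AddCommGroup V] [Module R V]
    [AddCommGroup V'] [Module R V'] (w : V → V') : Prop :=
  ∀ g h : Dual R V, ∃ G : Dual R V', ∀ x, G (w x) = g x * h x

/-- Along the line through `u` and `v`, the map `w` is homogeneous quadratic with polar
coefficient `b`. -/
def IsQuadraticOnLine (R : Type*) {V V' : Type*} [CommRing R] [AddCommGroup V] [Module R V]
    [AddCommGroup V'] [Module R V'] (w : V → V') (u v : V) (b : V') : Prop :=
  ∀ s t : R, w (s • u + t • v) = s ^ 2 • w u + (s * t) • b + t ^ 2 • w v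

theorem FactorsProducts.of_comp {V'' : Type*} [AddCommGroup V''] [Module R V''] {w : V → V'}
    (f : V' →ₗ[R] V'') (hw : FactorsProducts R (f ∘ w)) : FactorsProducts R w := fun g h =>
  let ⟨G, hG⟩ := hw g h
  ⟨G ∘ₗ f, hG⟩

theorem IsQuadraticOnLine.map {V'' : Type*} [AddCommGroup V''] [Module R V''] {w : V → V'}
    {u v : V} {b : V'} (hb : IsQuadraticOnLine R w u v b) (f : V' →ₗ[R] V'') :
    IsQuadraticOnLine R (f ∘ w) u v (f b) := fun s t => by
  simp only [Function.comp_apply, hb s t, map_add, map_smul]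

end QuadraticAlongLines

section ProductsOfFunctionals

variable {F V V' : Type*} [Field F] [AddCommGroup V] [Module F V] [AddCommGroup V'] [Module F V']

theorem FactorsProducts.mem_span_image_iff {w : V → V'} (hw : FactorsProducts F w)
    {W : Submodule F V} {x : V} : w x ∈ span F (w '' W) ↔ x ∈ W := by
  refine ⟨fun hx => ?_, fun hx => subset_span ⟨x, hx, rfl⟩⟩
  by_contra hxW
  obtain ⟨g, hgx, hgW⟩ := exists_le_ker_of_notMem hxW
  obtain ⟨G, hG⟩ := hw g g
  have hspan : span F (w '' W) ≤ LinearMap.ker G := by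
    rw [span_le]
    rintro _ ⟨y, hy, rfl⟩
    have hgy : g y = 0 := hgW hy
    simp [hG, hgy]
  have hGx : G (w x) = 0 := hspan hx
  simp [hG, hgx] at hGx

theorem FactorsProducts.apply_ne_zero {w : V → V'} (hw : FactorsProducts F w) {x : V}
    (hx : x ≠ 0) : w x ≠ 0 := by
  intro h
  have hmem : w x ∈ span F (w '' (⊥ : Submodule F V)) := h ▸ zero_mem _
  exact hx ((mem_bot F).1 (hw.mem_span_image_iff.1 hmem))

theorem exists_dual_apply_eq_ite {ι : Type*} [Finite ι] [DecidableEq ι] {v : ι → V}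
    (hv : LinearIndependent F v) :
    ∃ g : ι → Dual F V, ∀ i j, g i (v j) = if i = j then 1 else 0 := by
  cases nonempty_fintype ι
  obtain ⟨L, hL⟩ := (Fintype.linearCombination F v).exists_leftInverse_of_injective
    (LinearMap.ker_eq_bot.2 hv.fintypeLinearCombination_injective)
  refine ⟨fun i => LinearMap.proj i ∘ₗ L, fun i j => ?_⟩
  have hLv : L (v j) = Pi.single j 1 := by simpa using LinearMap.congr_fun hL (Pi.single j 1)
  simp [hLv, Pi.single_apply]

theorem FactorsProducts.linearIndependent {w : V → V'} (hw : FactorsProducts F w) {u v : V} {b : V'}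
    (huv : LinearIndependent F ![u, v]) (hb : IsQuadraticOnLine F w u v b) :
    LinearIndependent F ![w u, b, w v] := by
  obtain ⟨g, hg⟩ := exists_dual_apply_eq_ite huv
  have hgu (i : Fin 2) : g i u = if i = 0 then 1 else 0 := hg i 0
  have hgv (i : Fin 2) : g i v = if i = 1 then 1 else 0 := hg i 1
  choose G hG using fun i j => hw (g i) (g j)
  have hGb (i j : Fin 2) : G i j b = g i u * g j v + g i v * g j u := by
    have hsum : G i j (w (u + v)) = G i j (w u + b + w v) := by
      simpa using congrArg (G i j) (hb 1 1)
    simp only [map_add, hG] at hsum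
    linear_combination -hsum
  apply LinearIndependent.of_pairwise_dual_eq_zero_one _ ![G 0 0, G 0 1, G 1 1]
  · intro i j hij
    fin_cases i <;> fin_cases j <;> simp_all
  · intro i
    fin_cases i <;> simp [hG, hGb, hgu, hgv]

theorem span_range_eq_top_of_forall_dual {α : Type*} {w : α → V'}
    (hw : ∀ g : Dual F V', (∀ x, g (w x) = 0) → g = 0) : span F (Set.range w) = ⊤ := by
  by_contra hne
  obtain ⟨g, hg0, hg⟩ := exists_le_ker_of_lt_top _ (lt_top_iff_ne_top.2 hne)
  exact hg0 (hw g fun x => hg (subset_span ⟨x, rfl⟩))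

end ProductsOfFunctionals

section Veronese

variable {R ι : Type*} [CommRing R]

/-- The quadric veronesean map `x ↦ (x_i x_j)_{i ≤ j}`, as a quadratic map with coordinates
indexed by unordered pairs. -/
def veronese (R ι : Type*) [CommRing R] : QuadraticMap R (ι → R) (Sym2 ι → R) :=
  .ofPolar (fun x e => (e.map x).mul)
    (fun a x => by
      ext ⟨i, j⟩
      simp only [Pi.smul_apply, smul_eq_mul, Sym2.map_mk, Sym2.mul_mk]
      ring)
    (fun x y z => by
      ext ⟨i, j⟩
      simp only [polar, Pi.add_apply, Pi.sub_apply, Sym2.map_mk, Sym2.mul_mk]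
      ring)
    (fun a x y => by
      ext ⟨i, j⟩
      simp only [polar, Pi.add_apply, Pi.smul_apply, smul_eq_mul, Pi.sub_apply, Sym2.map_mk,
        Sym2.mul_mk]
      ring)

theorem veronese_apply_mk (x : ι → R) (i j : ι) : veronese R ι x s(i, j) = x i * x j := rfl

theorem factorsProducts_veronese [Finite ι] : FactorsProducts R (veronese R ι) := by
  classical
  cases nonempty_fintype ι
  intro g h
  refine ⟨∑ i, ∑ j, (g (Pi.single i 1) * h (Pi.single j 1)) • LinearMap.proj s(i, j), fun x => ?_⟩
  have hsum (k : Dual R (ι → R)) : k x = ∑ i, k (Pi.single i 1) * x i := by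
    conv_lhs => rw [pi_eq_sum_univ' x]
    simp [mul_comm]
  rw [hsum g, hsum h, Finset.sum_mul_sum]
  simp only [LinearMap.sum_apply, LinearMap.smul_apply, LinearMap.proj_apply, veronese_apply_mk,
    smul_eq_mul]
  exact Finset.sum_congr rfl fun i _ => Finset.sum_congr rfl fun j _ => mul_mul_mul_comm ..

theorem veronese_single [DecidableEq ι] (i : ι) :
    veronese R ι (Pi.single i 1) = Pi.single s(i, i) 1 := by
  ext ⟨a, b⟩
  simp only [veronese_apply_mk, Pi.single_apply, Sym2.eq_iff]
  grind

theorem polar_veronese_single [DecidableEq ι] {i j : ι} (hij : i ≠ j) :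
    polar (veronese R ι) (Pi.single i 1) (Pi.single j 1) = Pi.single s(i, j) 1 := by
  ext ⟨a, b⟩
  simp only [polar, Pi.sub_apply, Pi.add_apply, veronese_apply_mk, Pi.single_apply, Sym2.eq_iff]
  grind

theorem span_range_veronese [Finite ι] : span R (Set.range (veronese R ι)) = ⊤ := by
  classical
  cases nonempty_fintype ι
  have hmem (x : ι → R) : veronese R ι x ∈ span R (Set.range (veronese R ι)) :=
    subset_span ⟨x, rfl⟩
  rw [eq_top_iff, ← (Pi.basisFun R (Sym2 ι)).span_eq, span_le]
  rintro _ ⟨⟨i, j⟩, rfl⟩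
  rw [SetLike.mem_coe, Pi.basisFun_apply]
  by_cases hij : i = j
  · subst hij
    exact veronese_single (R := R) i ▸ hmem _
  · rw [← polar_veronese_single hij]
    exact sub_mem (sub_mem (hmem _) (hmem _)) (hmem _)

/-- The quadric veronesean map extended by the coordinates `θ(x) x_i`. -/
def extVeronese (θ : (ι → R) → R) (x : ι → R) : (Sym2 ι → R) × (ι → R) :=
  (veronese R ι x, θ x • x)

theorem factorsProducts_extVeronese [Finite ι] (θ : (ι → R) → R) :
    FactorsProducts R (extVeronese θ) :=
  .of_comp (LinearMap.fst R _ _) factorsProducts_veronese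

theorem isQuadraticOnLine_extVeronese {θ : (ι → R) → R} {u v : ι → R}
    (hθ : ∀ s t : R, θ (s • u + t • v) = s * θ u + t * θ v) :
    IsQuadraticOnLine R (extVeronese θ) u v
      (polar (veronese R ι) u v, θ u • v + θ v • u) := by
  intro s t
  ext k
  · simp only [extVeronese, QuadraticMap.map_add (veronese R ι), QuadraticMap.map_smul,
      polar_smul_right, polar_smul_left, smul_add, Pi.add_apply, Pi.smul_apply, smul_eq_mul,
      Prod.smul_mk, Prod.mk_add_mk]
    ring
  · simp only [extVeronese, hθ, smul_add, Pi.add_apply, Pi.smul_apply, smul_eq_mul, Prod.smul_mk,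
      Prod.mk_add_mk]
    ring

/-- Third differences kill the quadratic map `Q` and turn `θ ℓ` into
`(θ (x + y) - θ x - θ y) ℓ z`. -/
theorem apply_eq_zero_of_quadratic_add_mul_eq_zero [NoZeroDivisors R] {V : Type*} [AddCommGroup V]
    [Module R V] {Q : QuadraticForm R V} {θ : V → R} {l : Dual R V} (h : ∀ x, Q x + θ x * l x = 0)
    {x y z : V}
    (hxy : θ (x + y) ≠ θ x + θ y) (hxz : θ (x + z) = θ x + θ z) (hyz : θ (y + z) = θ y + θ z)
    (hxyz : θ (x + y + z) = θ (x + y) + θ z) : l z = 0 := by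
  have hQ := Q.map_add_add_add_map x y z
  have hdiff : (θ (x + y) - (θ x + θ y)) * l z = 0 := by
    have hxyz₀ := h (x + y + z)
    have hxy₀ := h (x + y)
    have hxz₀ := h (x + z)
    have hyz₀ := h (y + z)
    rw [add_comm z x] at hQ
    simp only [map_add, hxz, hyz, hxyz] at hxyz₀ hxy₀ hxz₀ hyz₀
    linear_combination hxyz₀ - hxy₀ - hxz₀ - hyz₀ + h x + h y + h z - hQ
  exact (mul_eq_zero.1 hdiff).resolve_left (sub_ne_zero.2 hxy)

theorem span_range_extVeronese {F : Type*} [Field F] [Finite ι] [DecidableEq ι] {θ : (ι → F) → F}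
    (hθ : ∀ k, ∃ x y, θ (x + y) ≠ θ x + θ y ∧ θ (x + Pi.single k 1) = θ x + θ (Pi.single k 1) ∧
      θ (y + Pi.single k 1) = θ y + θ (Pi.single k 1) ∧
      θ (x + y + Pi.single k 1) = θ (x + y) + θ (Pi.single k 1)) :
    span F (Set.range (extVeronese θ)) = ⊤ := by
  refine span_range_eq_top_of_forall_dual fun g hg => ?_
  let G := g ∘ₗ LinearMap.inl F (Sym2 ι → F) (ι → F)
  let l := g ∘ₗ LinearMap.inr F (Sym2 ι → F) (ι → F)
  have hGl (x : ι → F) : G (veronese F ι x) + θ x * l x = 0 := by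
    rw [← hg x, ← smul_eq_mul, ← map_smul, LinearMap.comp_apply, LinearMap.comp_apply, ← map_add]
    simp [extVeronese]
  have hl : l = 0 := LinearMap.pi_ext' fun k => LinearMap.ext_ring <| by
    obtain ⟨x, y, hxy, hxk, hyk, hxyk⟩ := hθ k
    exact apply_eq_zero_of_quadratic_add_mul_eq_zero (Q := G.compQuadraticMap (veronese F ι))
      hGl hxy hxk hyk hxyk
  have hG : G = 0 := LinearMap.ext_on_range span_range_veronese fun x => by
    simpa [hl] using hGl x
  exact LinearMap.prod_ext hG hl

end Veronese

section QuadraticRoot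

variable {R V : Type*} [CommRing R] [CharP R 2] [PerfectRing R 2] [AddCommGroup V] [Module R V]

/-- The square root `√q` of a quadratic form over a perfect ring of characteristic 2. -/
noncomputable def quadraticRoot (q : QuadraticForm R V) (x : V) : R :=
  (frobeniusEquiv R 2).symm (q x)

theorem quadraticRoot_smul (q : QuadraticForm R V) (s : R) (x : V) :
    quadraticRoot q (s • x) = s * quadraticRoot q x := by
  rw [quadraticRoot, QuadraticMap.map_smul, smul_eq_mul, ← sq, map_mul, frobeniusEquiv_symm_pow,
    quadraticRoot]

theorem quadraticRoot_add (q : QuadraticForm R V) (x y : V) :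
    quadraticRoot q (x + y) =
      quadraticRoot q x + quadraticRoot q y + (frobeniusEquiv R 2).symm (polar q x y) := by
  simp only [quadraticRoot, QuadraticMap.map_add q, map_add]

theorem quadraticRoot_add_eq_iff {q : QuadraticForm R V} {x y : V} :
    quadraticRoot q (x + y) = quadraticRoot q x + quadraticRoot q y ↔ polar q x y = 0 := by
  rw [quadraticRoot_add, add_eq_left (M := R), map_eq_zero_iff _ (RingEquiv.injective _)]

theorem quadraticRoot_smul_add_smul {q : QuadraticForm R V} {u v : V} (huv : polar q u v = 0)
    (s t : R) :
    quadraticRoot q (s • u + t • v) = s * quadraticRoot q u + t * quadraticRoot q v := by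
  have hst : polar q (s • u) (t • v) = 0 := by
    rw [polar_smul_left, polar_smul_right, huv, smul_zero, smul_zero]
  rw [quadraticRoot_add_eq_iff.2 hst, quadraticRoot_smul, quadraticRoot_smul]

theorem span_range_extVeronese_quadraticRoot {F ι : Type*} [Field F]
    [CharP F 2] [PerfectRing F 2] [Finite ι] [DecidableEq ι]
    {q : QuadraticForm F (ι → F)}
    (hq : ∀ k, ∃ x y, polar q x y ≠ 0 ∧ polar q x (Pi.single k 1) = 0 ∧
      polar q y (Pi.single k 1) = 0) :
    span F (Set.range (extVeronese (quadraticRoot q))) = ⊤ := by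
  refine span_range_extVeronese fun k => ?_
  obtain ⟨x, y, hxy, hxk, hyk⟩ := hq k
  refine ⟨x, y, quadraticRoot_add_eq_iff.not.2 hxy, quadraticRoot_add_eq_iff.2 hxk,
    quadraticRoot_add_eq_iff.2 hyk, quadraticRoot_add_eq_iff.2 ?_⟩
  rw [polar_add_left, hxk, hyk, add_zero]

end QuadraticRoot

section SymplecticQuadrangle

variable {F : Type*} [Field F]

/-- The quadratic form `x₀x₃ + x₁x₂` on `F⁴`. -/
def hyperbolicForm (F : Type*) [Field F] : QuadraticForm F (Fin 4 → F) :=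
  linMulLin (LinearMap.proj 0) (LinearMap.proj 3) + linMulLin (LinearMap.proj 1) (LinearMap.proj 2)

theorem nu4_eq_veronese (x : Fin 4 → F) : nu4 F x = veronese F (Fin 4) x := by
  ext ⟨i, j⟩
  rfl

theorem polar_hyperbolicForm (x y : Fin 4 → F) :
    polar (hyperbolicForm F) x y = alphaForm F x y := by
  simp only [polar, hyperbolicForm, alphaForm, _root_.add_apply, linMulLin_apply,
    LinearMap.proj_apply, Pi.add_apply]
  ring

theorem exists_alphaForm_ne_zero_of_single (k : Fin 4) :
    ∃ x y, alphaForm F x y ≠ 0 ∧ alphaForm F x (Pi.single k 1) = 0 ∧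
      alphaForm F y (Pi.single k 1) = 0 := by
  by_cases hk : k = 0 ∨ k = 3
  · refine ⟨Pi.single 1 1, Pi.single 2 1, ?_⟩
    rcases hk with rfl | rfl <;> simp [alphaForm]
  · refine ⟨Pi.single 0 1, Pi.single 3 1, ?_⟩
    obtain rfl | rfl : k = 1 ∨ k = 2 := by omega
    all_goals simp [alphaForm]

/-- The point of `W(3,F)` spanned by a nonzero vector. -/
def SPoint.ofVector (x : Fin 4 → F) (hx : x ≠ 0) : SPoint F :=
  ⟨span F {x}, finrank_span_singleton hx⟩

theorem SPoint.exists_eq_ofVector (p : SPoint F) : ∃ x hx, p = ofVector x hx := by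
  obtain ⟨x, hxp, hx⟩ := p.1.exists_mem_ne_zero_of_ne_bot fun h =>
    zero_ne_one ((finrank_bot F _).symm.trans (h ▸ p.2))
  refine ⟨x, hx, Subtype.ext (eq_of_le_of_finrank_eq ?_ ?_).symm⟩
  · exact (span_singleton_le_iff_mem x _).2 hxp
  · exact (ofVector x hx).2.trans p.2.symm

theorem SPoint.ofVector_le_iff {x : Fin 4 → F} {hx : x ≠ 0} {W : Submodule F (Fin 4 → F)} :
    (ofVector x hx).1 ≤ W ↔ x ∈ W :=
  span_singleton_le_iff_mem x W

theorem exists_linearIndependent_pair_of_finrank_eq_two {V : Type*} [AddCommGroup V] [Module F V]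
    {W : Submodule F V} (hW : finrank F W = 2) :
    ∃ u v, LinearIndependent F ![u, v] ∧ span F {u, v} = W := by
  have : FiniteDimensional F W := .of_finrank_pos (by omega)
  let b := finBasisOfFinrankEq F W hW
  have hb : W.subtype ∘ b = ![(b 0 : V), (b 1 : V)] := by
    ext i
    fin_cases i <;> rfl
  refine ⟨b 0, b 1, hb ▸ b.linearIndependent.map' _ W.ker_subtype, ?_⟩
  rw [← Matrix.range_cons_cons_empty _ _ ![], ← hb, Set.range_comp, ← map_span, b.span_eq,
    map_subtype_top]

/-- The map `w` is homogeneous quadratic along every totally isotropic line of `W(3,F)`. -/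
def IsQuadraticOnIsotropicLines (F : Type*) [Field F] {V' : Type*} [AddCommGroup V'] [Module F V']
    (w : (Fin 4 → F) → V') : Prop :=
  ∀ u v, alphaForm F u v = 0 → ∃ b, IsQuadraticOnLine F w u v b

variable {V' : Type*} [AddCommGroup V'] [Module F V'] {w : (Fin 4 → F) → V'}

theorem IsQuadraticOnIsotropicLines.apply_smul (hline : IsQuadraticOnIsotropicLines F w)
    (s : F) (x : Fin 4 → F) : w (s • x) = s ^ 2 • w x := by
  obtain ⟨b, hb⟩ := hline x 0 (by simp [alphaForm])
  simpa using hb s 0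

theorem IsQuadraticOnIsotropicLines.span_image_ofVector (hline : IsQuadraticOnIsotropicLines F w)
    {x : Fin 4 → F} (hx : x ≠ 0) : span F (w '' (SPoint.ofVector x hx).1) = span F {w x} := by
  apply le_antisymm
  · rw [span_le]
    rintro _ ⟨y, hy, rfl⟩
    obtain ⟨s, rfl⟩ := mem_span_singleton.1 hy
    rw [hline.apply_smul]
    exact smul_mem _ _ (mem_span_singleton_self _)
  · exact span_mono (Set.singleton_subset_iff.2 ⟨x, mem_span_singleton_self x, rfl⟩)

theorem IsQuadraticOnIsotropicLines.isConic_image (hline : IsQuadraticOnIsotropicLines F w)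
    (hprod : FactorsProducts F w) {l : Set (SPoint F)} (hl : l ∈ SLines F) :
    IsConic F ((fun p : SPoint F => span F (w '' p.1)) '' l) := by
  obtain ⟨W, hW, hiso, rfl⟩ := hl
  obtain ⟨u, v, huv, rfl⟩ := exists_linearIndependent_pair_of_finrank_eq_two hW
  obtain ⟨b, hb⟩ := hline u v (hiso u (subset_span (by simp)) v (subset_span (by simp)))
  refine ⟨Fintype.linearCombination F ![w u, b, w v],
    (hprod.linearIndependent huv hb).fintypeLinearCombination_injective, ?_⟩
  have hconic (s t : F) : Fintype.linearCombination F ![w u, b, w v] ![s ^ 2, s * t, t ^ 2] =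
      w (s • u + t • v) := by
    simp [hb s t, Fintype.linearCombination_apply, Fin.sum_univ_three]
  have hne (s t : F) : s • u + t • v ≠ 0 ↔ ¬(s = 0 ∧ t = 0) :=
    not_congr ⟨LinearIndependent.pair_iff.1 huv s t, by rintro ⟨rfl, rfl⟩; simp⟩
  ext C
  simp only [Set.mem_image, Set.mem_ofPred_eq, hconic]
  constructor
  · rintro ⟨p, hp, rfl⟩
    obtain ⟨x, hx, rfl⟩ := p.exists_eq_ofVector
    obtain ⟨s, t, rfl⟩ := mem_span_pair.1 (SPoint.ofVector_le_iff.1 hp)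
    exact ⟨s, t, (hne s t).1 hx, hline.span_image_ofVector hx⟩
  · rintro ⟨s, t, hst, rfl⟩
    exact ⟨.ofVector _ ((hne s t).2 hst), SPoint.ofVector_le_iff.2 (mem_span_pair.2 ⟨s, t, rfl⟩),
      hline.span_image_ofVector _⟩

theorem IsQuadraticOnIsotropicLines.disjoint_iSup (hline : IsQuadraticOnIsotropicLines F w)
    (hprod : FactorsProducts F w)
    {p : SPoint F} {l : Set (SPoint F)} (hl : l ∈ SLines F) (hpl : p ∉ l) :
    Disjoint (span F (w '' p.1)) (⨆ x ∈ l, span F (w '' x.1)) := by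
  obtain ⟨W, -, -, rfl⟩ := hl
  obtain ⟨x, hx, rfl⟩ := p.exists_eq_ofVector
  have hsup : ⨆ y ∈ {p : SPoint F | p.1 ≤ W}, span F (w '' y.1) ≤ span F (w '' W) :=
    iSup₂_le fun y hy => span_mono (Set.image_mono hy)
  rw [hline.span_image_ofVector, disjoint_comm]
  refine .mono_left hsup ?_
  rw [disjoint_span_singleton' (hprod.apply_ne_zero hx), hprod.mem_span_image_iff]
  exact fun hxW => hpl (SPoint.ofVector_le_iff.2 hxW)

theorem IsQuadraticOnIsotropicLines.iSup_eq_top (hline : IsQuadraticOnIsotropicLines F w)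
    (hspan : span F (Set.range w) = ⊤) : ⨆ p : SPoint F, span F (w '' p.1) = ⊤ := by
  rw [eq_top_iff, ← hspan, span_le]
  rintro _ ⟨x, rfl⟩
  by_cases hx : x = 0
  · have hw0 : w 0 = 0 := by simpa using hline.apply_smul 0 0
    rw [hx, hw0]
    exact zero_mem _
  · exact mem_iSup_of_mem (SPoint.ofVector x hx) (subset_span ⟨x, mem_span_singleton_self x, rfl⟩)

/-- The veronesean embedding `⟨x⟩ ↦ ⟨w(x)⟩` of `W(3,F)` given by a vector map `w` that is quadratic
along the lines of `W(3,F)` and through which the quadric veronesean map factors linearly. -/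
def VerEmb.ofVectorMap (w : (Fin 4 → F) → V')
    (hline : IsQuadraticOnIsotropicLines F w)
    (hprod : FactorsProducts F w) (hspan : span F (Set.range w) = ⊤) :
    VerEmb F (SPoint F) (SLines F) V' where
  toFun p := span F (w '' p.1)
  point p := by
    obtain ⟨x, hx, rfl⟩ := p.exists_eq_ofVector
    exact ⟨w x, hprod.apply_ne_zero hx, hline.span_image_ofVector hx⟩
  injective p p' h := Subtype.ext <| SetLike.ext fun x => by
    rw [← hprod.mem_span_image_iff, ← hprod.mem_span_image_iff (W := p'.1)]
    exact iff_of_eq (congrArg (w x ∈ ·) h)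
  conic _ hl := hline.isConic_image hprod hl
  disjoint_line _ _ hl hpl := (hline.disjoint_iSup hprod hl hpl).eq_bot
  spans := hline.iSup_eq_top hspan

/-- The veronesean embedding of `W(3,F)` given by the quadric veronesean map extended by the
functions `x_i √(x₀x₃ + x₁x₂)`, in any space `V'` identified with the target by `e`. -/
noncomputable def rootVerEmb [CharP F 2] [PerfectRing F 2]
    (e : ((Sym2 (Fin 4) → F) × (Fin 4 → F)) ≃ₗ[F] V') : VerEmb F (SPoint F) (SLines F) V' :=
  .ofVectorMap (e ∘ extVeronese (quadraticRoot (hyperbolicForm F)))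
    (fun u v huv => ⟨_, (isQuadraticOnLine_extVeronese <| quadraticRoot_smul_add_smul <|
      (polar_hyperbolicForm u v).trans huv).map e.toLinearMap⟩)
    (.of_comp e.symm.toLinearMap <| by
      simpa [Function.comp_def] using
        factorsProducts_extVeronese (quadraticRoot (hyperbolicForm F)))
    (by
      rw [Set.range_comp, ← LinearEquiv.coe_coe, ← map_span, span_range_extVeronese_quadraticRoot,
        Submodule.map_top, LinearEquiv.range]
      simpa only [polar_hyperbolicForm] using exists_alphaForm_ne_zero_of_single)

theorem image_rootVerEmb [CharP F 2] [PerfectRing F 2]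
    (e : ((Sym2 (Fin 4) → F) × (Fin 4 → F)) ≃ₗ[F] V') (p : SPoint F) :
    (LinearMap.fst F _ _ ∘ₗ e.symm.toLinearMap) '' ((rootVerEmb e).toFun p : Set V') =
      (epsVS F p : Set (Sym2 (Fin 4) → F)) := by
  have hp : (rootVerEmb e).toFun p =
      span F ((e ∘ extVeronese (quadraticRoot (hyperbolicForm F))) '' p.1) := rfl
  rw [← map_coe, hp, map_span, Set.image_image, epsVS]
  simp [extVeronese, nu4_eq_veronese]

end SymplecticQuadrangle

/-- Let `F` be a perfect field of characteristic 2.  There exist a veronesean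
embedding `ε'` of `W(3,F)` of dimension 14 (codomain `F^14`) and a surjective linear
morphism `f` from `ε'` to the veronesean-spin embedding `ε : ⟨x⟩ ↦ ⟨ν₄(x)⟩` in `PG(F^10)`
whose kernel has dimension 4; in particular `ε` is a proper quotient of a 14-dimensional
veronesean embedding of `W(3,F)`. -/
theorem statement2 (F : Type) [Field F] [CharP F 2]
    (hperf : Function.Surjective fun x : F => x ^ 2) :
    ∃ (ε' : VerEmb F (SPoint F) (SLines F) (Fin 14 → F))
      (f : (Fin 14 → F) →ₗ[F] (Sym2 (Fin 4) → F)),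
      Function.Surjective f ∧
      (∀ p : SPoint F,
        f '' (ε'.toFun p : Set (Fin 14 → F)) = (epsVS F p : Set (Sym2 (Fin 4) → F))) ∧
      Module.finrank F ↥(LinearMap.ker f) = 4 := by
  have : PerfectRing F 2 := .ofSurjective F 2 hperf
  have hdim : finrank F ((Sym2 (Fin 4) → F) × (Fin 4 → F)) = finrank F (Fin 14 → F) := by
    simp [Sym2.card, Nat.choose]
  let e := LinearEquiv.ofFinrankEq _ _ hdim
  let f := LinearMap.fst F (Sym2 (Fin 4) → F) (Fin 4 → F) ∘ₗ e.symm.toLinearMap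
  have hf : Function.Surjective f := (LinearMap.fst_surjective (R := F)).comp e.symm.surjective
  have hker : 10 + finrank F (LinearMap.ker f) = 14 := by
    have hrank := f.finrank_range_add_finrank_ker
    rw [LinearMap.range_eq_top.2 hf, finrank_top] at hrank
    simpa [Sym2.card, Nat.choose] using hrank
  exact ⟨rootVerEmb e, f, hf, image_rootVerEmb e, by omega⟩
end

section
/- Let Γ = (P, L) be a point-line geometry, let ε be a veronesean embedding of Γ in PG(V), and let S ⊆ P be a set that 3-generates Γ. Then the points {ε(p) : p ∈ S} span V; in particular dim V ≤ |S|, so the dimension of every veronesean embedding of Γ is at most the 3-generating rank grk₃(Γ). -/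
open Cardinal

universe u v

/-- `S` is a 3-subspace of the point-line geometry with line set `L`: every line having at
least three points in `S` is contained in `S`. -/
def Is3Subspace {P : Type*} (L : Set (Set P)) (S : Set P) : Prop :=
  ∀ l ∈ L, (∃ x ∈ l ∩ S, ∃ y ∈ l ∩ S, ∃ z ∈ l ∩ S, x ≠ y ∧ x ≠ z ∧ y ≠ z) → l ⊆ S

/-- The 3-span of `X`: the smallest 3-subspace containing `X`. -/
def ThreeSpan {P : Type*} (L : Set (Set P)) (X : Set P) : Set P :=
  ⋂₀ {S | Is3Subspace L S ∧ X ⊆ S}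

/-- `X` 3-generates the geometry when its 3-span is the whole point set. -/
def ThreeGenerates {P : Type*} (L : Set (Set P)) (X : Set P) : Prop :=
  ThreeSpan L X = Set.univ

/-- The 3-generating rank: the minimum cardinality of a 3-generating set. -/
noncomputable def grk3 {P : Type*} (L : Set (Set P)) : Cardinal :=
  sInf {c : Cardinal | ∃ X : Set P, ThreeGenerates L X ∧ #↥X = c}

/-! Three distinct points of the standard conic are the rows of a projective Vandermonde matrix with
nonzero determinant, so three distinct points of any conic span its plane. Hence, for every subspace
`W`, the points of `Γ` mapped into `W` form a 3-subspace. Taking for `W` the span of the images of a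
3-generating set, every point of `Γ` is mapped into `W`. -/

theorem span_range_projVandermonde_eq_top {F : Type*} [Field F] {n : ℕ} {v w : Fin n → F}
    (h : Pairwise fun i j ↦ v j * w i ≠ v i * w j) :
    Submodule.span F (Set.range (Matrix.projVandermonde v w)) = ⊤ := by
  have hdet : (Matrix.projVandermonde v w).det ≠ 0 := by
    rw [Matrix.det_projVandermonde]
    exact Finset.prod_ne_zero_iff.2 fun i _ ↦ Finset.prod_ne_zero_iff.2 fun j hj ↦
      sub_ne_zero.2 (h (Finset.mem_Ioi.1 hj).ne)
  have hrows := Matrix.linearIndependent_rows_of_det_ne_zero hdet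
  exact hrows.span_eq_top_of_card_eq_finrank' (by simp)

section Conic

variable {R F V : Type*} [Field F] [AddCommGroup V] [Module F V]

/-- The vector representing the point of the standard conic with homogeneous parameters `(s, t)`. -/
def conicVec [CommSemiring R] (s t : R) : Fin 3 → R := ![s ^ 2, s * t, t ^ 2]

theorem projVandermonde_eq_conicVec [CommRing R] (s t : Fin 3 → R) (i : Fin 3) :
    Matrix.projVandermonde t s i = conicVec (s i) (t i) := by
  ext j
  fin_cases j <;> simp [Matrix.projVandermonde_apply, conicVec, Fin.rev, mul_comm]

theorem conicVec_mul_mul [CommSemiring R] (c s t : R) :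
    conicVec (c * s) (c * t) = c ^ 2 • conicVec s t := by
  ext i
  fin_cases i <;> simp [conicVec] <;> ring

theorem conicVec_mem_span_singleton {s t s' t' : F} (hst' : ¬(s' = 0 ∧ t' = 0))
    (h : s * t' = s' * t) : conicVec s t ∈ Submodule.span F {conicVec s' t'} := by
  obtain ⟨c, rfl, rfl⟩ : ∃ c, s = c * s' ∧ t = c * t' := by
    rcases not_and_or.1 hst' with hs' | ht'
    · exact ⟨s / s', by field_simp, by field_simp; linear_combination -h⟩
    · exact ⟨t / t', by field_simp; linear_combination h, by field_simp⟩
  exact Submodule.mem_span_singleton.2 ⟨c ^ 2, (conicVec_mul_mul c s' t').symm⟩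

theorem span_singleton_conicVec_eq {s t s' t' : F} (hst : ¬(s = 0 ∧ t = 0))
    (hst' : ¬(s' = 0 ∧ t' = 0)) (h : s * t' = s' * t) :
    Submodule.span F {conicVec s t} = Submodule.span F {conicVec s' t'} :=
  le_antisymm
    ((Submodule.span_singleton_le_iff_mem _ _).2 (conicVec_mem_span_singleton hst' h))
    ((Submodule.span_singleton_le_iff_mem _ _).2 (conicVec_mem_span_singleton hst h.symm))

theorem IsConic.le_of_injective_of_forall_le {C : Set (Submodule F V)} (hC : IsConic F C)
    {a : Fin 3 → Submodule F V} (ha : Function.Injective a) (haC : ∀ i, a i ∈ C)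
    {W : Submodule F V} (haW : ∀ i, a i ≤ W) {x : Submodule F V} (hx : x ∈ C) : x ≤ W := by
  obtain ⟨φ, -, rfl⟩ := hC
  choose s t hst hspan using haC
  have ha_map : ∀ i, a i = (Submodule.span F {conicVec (s i) (t i)}).map φ := fun i ↦ by
    rw [Submodule.map_span, Set.image_singleton]
    exact hspan i
  have hrows : Pairwise fun i j ↦ t j * s i ≠ t i * s j := fun i j hij h ↦ ha.ne hij <| by
    rw [ha_map i, ha_map j,
      span_singleton_conicVec_eq (hst i) (hst j) (by linear_combination h)]
  have hplane : LinearMap.range φ ≤ W := by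
    rw [LinearMap.range_eq_map, ← span_range_projVandermonde_eq_top hrows, Submodule.map_span_le]
    rintro _ ⟨i, rfl⟩
    rw [projVandermonde_eq_conicVec]
    exact haW i (ha_map i ▸ Submodule.mem_map_of_mem (Submodule.mem_span_singleton_self _))
  obtain ⟨s₀, t₀, -, rfl⟩ := hx
  exact (Submodule.span_singleton_le_iff_mem _ _).2 (hplane (LinearMap.mem_range_self _ _))

end Conic

section ThreeGenerates

variable {P : Type*} {L : Set (Set P)}

theorem ThreeGenerates.eq_univ_of_subset {S T : Set P} (hS : ThreeGenerates L S)
    (hT : Is3Subspace L T) (hST : S ⊆ T) : T = Set.univ :=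
  Set.univ_subset_iff.1 <| (Eq.ge hS).trans (Set.sInter_subset_of_mem ⟨hT, hST⟩)

theorem threeGenerates_univ : ThreeGenerates L Set.univ :=
  Set.univ_subset_iff.1 <| Set.subset_sInter fun _ h ↦ h.2

theorem exists_threeGenerates_mk_eq_grk3 (L : Set (Set P)) :
    ∃ X : Set P, ThreeGenerates L X ∧ #X = grk3 L :=
  csInf_mem (s := {c : Cardinal | ∃ X : Set P, ThreeGenerates L X ∧ #X = c})
    ⟨_, Set.univ, threeGenerates_univ, rfl⟩

end ThreeGenerates

theorem lift_rank_iSup_le_of_isPrincipal {R : Type*} {M : Type v} {ι : Type u} [Semiring R]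
    [StrongRankCondition R] [AddCommMonoid M] [Module R M] {N : ι → Submodule R M}
    (hN : ∀ i, (N i).IsPrincipal) :
    lift.{u} (Module.rank R ↥(⨆ i, N i)) ≤ lift.{v} #ι := by
  choose w hw using fun i ↦ (hN i).principal
  rw [iSup_congr hw, ← Submodule.span_range_eq_iSup]
  exact (lift_le.2 (rank_span_le _)).trans mk_range_le_lift

section LinesToConics

variable {F : Type*} {P : Type u} {V : Type v} [Field F] [AddCommGroup V] [Module F V]
  {L : Set (Set P)} {ε : P → Submodule F V}

theorem is3Subspace_setOf_le (hinj : ∀ l ∈ L, Set.InjOn ε l) (hconic : ∀ l ∈ L, IsConic F (ε '' l))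
    (W : Submodule F V) : Is3Subspace L {p | ε p ≤ W} := by
  rintro l hl ⟨x, ⟨hxl, hxW⟩, y, ⟨hyl, hyW⟩, z, ⟨hzl, hzW⟩, hxy, hxz, hyz⟩ p hp
  have hxyz : Function.Injective ![x, y, z] := by
    intro i j
    fin_cases i <;> fin_cases j <;> simp [*, Ne.symm]
  have hxyz_mem : ∀ i, ![x, y, z] i ∈ l := by simp [Fin.forall_fin_succ, *]
  have hxyz_le : ∀ i, ε (![x, y, z] i) ≤ W := by
    simpa [Fin.forall_fin_succ] using ⟨hxW, hyW, hzW⟩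
  exact (hconic l hl).le_of_injective_of_forall_le
    (fun i j h ↦ hxyz (hinj l hl (hxyz_mem i) (hxyz_mem j) h))
    (fun i ↦ Set.mem_image_of_mem ε (hxyz_mem i)) hxyz_le (Set.mem_image_of_mem ε hp)

theorem ThreeGenerates.iSup_eq {S : Set P} (hS : ThreeGenerates L S)
    (hinj : ∀ l ∈ L, Set.InjOn ε l) (hconic : ∀ l ∈ L, IsConic F (ε '' l)) :
    ⨆ p ∈ S, ε p = ⨆ p, ε p := by
  refine le_antisymm (iSup₂_le_iSup _ ε) (iSup_le fun p ↦ ?_)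
  have hT := hS.eq_univ_of_subset (is3Subspace_setOf_le hinj hconic (⨆ q ∈ S, ε q))
    fun q hq ↦ le_biSup ε hq
  exact Set.eq_univ_iff_forall.1 hT p

theorem ThreeGenerates.lift_rank_iSup_le {S : Set P} (hS : ThreeGenerates L S)
    (hpoint : ∀ p, (ε p).IsPrincipal) (hinj : ∀ l ∈ L, Set.InjOn ε l)
    (hconic : ∀ l ∈ L, IsConic F (ε '' l)) :
    lift.{u} (Module.rank F ↥(⨆ p, ε p)) ≤ lift.{v} #S := by
  rw [← hS.iSup_eq hinj hconic, iSup_subtype']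
  exact lift_rank_iSup_le_of_isPrincipal fun p : S ↦ hpoint p

theorem statement9_general (hpoint : ∀ p, (ε p).IsPrincipal) (hinj : ∀ l ∈ L, Set.InjOn ε l)
    (hconic : ∀ l ∈ L, IsConic F (ε '' l)) {S : Set P} (hS : ThreeGenerates L S) :
    ⨆ p ∈ S, ε p = ⨆ p, ε p ∧
    lift.{u} (Module.rank F ↥(⨆ p, ε p)) ≤ lift.{v} #S ∧
    lift.{u} (Module.rank F ↥(⨆ p, ε p)) ≤ lift.{v} (grk3 L) := by
  obtain ⟨X, hX, hX_card⟩ := exists_threeGenerates_mk_eq_grk3 L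
  exact ⟨hS.iSup_eq hinj hconic, hS.lift_rank_iSup_le hpoint hinj hconic,
    hX_card ▸ hX.lift_rank_iSup_le hpoint hinj hconic⟩

end LinesToConics

/-- Let `Γ = (P,L)` be a point-line geometry, `ε` a veronesean embedding of
`Γ` in `PG(V)` and `S ⊆ P` a 3-generating set.  Then `{ε(p) : p ∈ S}` spans `V`; in
particular `dim V ≤ |S|`, so the dimension of every veronesean embedding of `Γ` is at most
the 3-generating rank `grk₃(Γ)`. -/
theorem statement9 (F : Type) [Field F] {P : Type} (L : Set (Set P))
    (hgeom : ∀ l ∈ L, ∃ x ∈ l, ∃ y ∈ l, x ≠ y)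
    (V : Type) [AddCommGroup V] [Module F V]
    (ε : VerEmb F P L V) (S : Set P) (hS : ThreeGenerates L S) :
    (⨆ p ∈ S, ε.toFun p) = ⊤ ∧
    Module.rank F V ≤ #↥S ∧
    Module.rank F V ≤ grk3 L := by
  rw [← rank_top F V, ← ε.spans]
  simpa only [lift_uzero] using statement9_general
    (fun p ↦ ⟨(ε.point p).imp fun _ hw ↦ hw.2⟩) (fun _ _ ↦ ε.injective.injOn) ε.conic hS
end

section
/- Let q be an odd prime power and F = F_q, and suppose −1 is a square in F. Then there exist g ∈ SL(2,F) with g({a_∞, a_0, a_1}) = {a_∞, a_0, a_1} and a point a_λ ∈ A^□ such that g(a_λ) ∈ A^◇; that is, the setwise stabilizer of {a_∞, a_0, a_1} in SL(2,F) contains an element mapping some element of A^□ onto an element of A^◇. -/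
/-- `SL(2,F)`. -/
abbrev SL2 (F : Type*) [Field F] := Matrix.SpecialLinearGroup (Fin 2) F

/-- The action of `g ∈ SL(2,F)` on subspaces of `F²`, through its linear action on `F²`. -/
def pgact (F : Type*) [Field F] (g : SL2 F) (W : Submodule F (Fin 2 → F)) :
    Submodule F (Fin 2 → F) :=
  Submodule.map (Matrix.toLin' (g : Matrix (Fin 2) (Fin 2) F)) W

/-- The point `⟨x⟩` of `PG(1,F)`. -/
def ptv (F : Type*) [Field F] (x : Fin 2 → F) : Submodule F (Fin 2 → F) :=
  Submodule.span F {x}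

/-- The point `a_∞ = ⟨(1,0)⟩` of `PG(1,F)`. -/
def aInfty (F : Type*) [Field F] : Submodule F (Fin 2 → F) := ptv F ![1, 0]

/-- The point `a_λ = ⟨(λ,1)⟩` of `PG(1,F)`. -/
def aPt (F : Type*) [Field F] (l : F) : Submodule F (Fin 2 → F) := ptv F ![l, 1]

/-- `A^□ = {a_λ : λ a nonzero square}`. -/
def ASq (F : Type*) [Field F] : Set (Submodule F (Fin 2 → F)) :=
  {W | ∃ l : F, l ≠ 0 ∧ IsSquare l ∧ W = aPt F l}

/-- `A^◇ = {a_λ : λ a non-square}`. -/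
def ANSq (F : Type*) [Field F] : Set (Submodule F (Fin 2 → F)) :=
  {W | ∃ l : F, ¬ IsSquare l ∧ W = aPt F l}

/-! The stabilizer of `{a_∞, a_0, a_1}` contains the 3-cycle `a_∞ ↦ a_0 ↦ a_1 ↦ a_∞`, which acts by
`λ ↦ (1 - λ)⁻¹` and is induced by an integral matrix of determinant `1`. So it suffices to find a
nonzero square `λ` with `1 - λ` a non-square. Parametrizing `x² + y² n = 1` rationally gives
`1 - ((n - 1) / (n + 1))² = n (2 / (n + 1))²`, so any non-square `n ≠ -1` yields such a `λ`; if `-1`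
is a square, every non-square qualifies. -/

section ProjectiveLine

variable {F : Type*} [Field F]

theorem pgact_ptv (g : SL2 F) (x : Fin 2 → F) :
    pgact F g (ptv F x) = ptv F ((g : Matrix (Fin 2) (Fin 2) F).mulVec x) := by
  simp only [pgact, ptv, Submodule.map_span, Set.image_singleton, Matrix.toLin'_apply]

theorem ptv_smul {c : F} (hc : c ≠ 0) (x : Fin 2 → F) : ptv F (c • x) = ptv F x :=
  Submodule.span_singleton_smul_eq hc.isUnit x

theorem ptv_eq_aPt_div (x : F) {y : F} (hy : y ≠ 0) : ptv F ![x, y] = aPt F (x / y) := by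
  have hvec : ![x, y] = y • ![x / y, 1] := by simp [mul_div_cancel₀ x hy]
  rw [hvec, ptv_smul hy, aPt]

theorem ptv_eq_aInfty {x : F} (hx : x ≠ 0) : ptv F ![x, 0] = aInfty F := by
  have hvec : ![x, 0] = x • ![1, 0] := by simp
  rw [hvec, ptv_smul hx, aInfty]

end ProjectiveLine

section ThreeCycle

variable (F : Type*) [Field F]

/-- The element of `SL(2,F)` inducing `λ ↦ (1 - λ)⁻¹` on `PG(1,F)`, which permutes
`a_∞ ↦ a_0 ↦ a_1 ↦ a_∞` cyclically. -/
def threeCycle : SL2 F := ⟨!![0, 1; -1, 1], by simp [Matrix.det_fin_two_of]⟩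

theorem pgact_threeCycle_ptv (x y : F) :
    pgact F (threeCycle F) (ptv F ![x, y]) = ptv F ![y, y - x] := by
  rw [pgact_ptv]
  congr 1
  ext j
  fin_cases j <;> simp [threeCycle, Matrix.mulVec, sub_eq_neg_add]

theorem pgact_threeCycle_aInfty : pgact F (threeCycle F) (aInfty F) = aPt F 0 := by
  rw [aInfty, pgact_threeCycle_ptv, ptv_eq_aPt_div 0 (by simp), zero_div]

theorem pgact_threeCycle_aPt_one : pgact F (threeCycle F) (aPt F 1) = aInfty F := by
  rw [aPt, pgact_threeCycle_ptv, sub_self, ptv_eq_aInfty one_ne_zero]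

variable {F} in
theorem pgact_threeCycle_aPt {l : F} (hl : l ≠ 1) :
    pgact F (threeCycle F) (aPt F l) = aPt F (1 - l)⁻¹ := by
  rw [aPt, pgact_threeCycle_ptv, ptv_eq_aPt_div 1 (sub_ne_zero.mpr hl.symm), one_div]

theorem pgact_threeCycle_aPt_zero : pgact F (threeCycle F) (aPt F 0) = aPt F 1 := by
  rw [pgact_threeCycle_aPt zero_ne_one, sub_zero, inv_one]

theorem pgact_threeCycle_image :
    pgact F (threeCycle F) '' {aInfty F, aPt F 0, aPt F 1} = {aInfty F, aPt F 0, aPt F 1} := by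
  rw [Set.image_insert_eq, Set.image_pair, pgact_threeCycle_aInfty, pgact_threeCycle_aPt_zero,
    pgact_threeCycle_aPt_one, Set.pair_comm (aPt F 1), Set.insert_comm]

variable {F} in
theorem pgact_threeCycle_aPt_mem_ANSq {l : F} (hl : ¬ IsSquare (1 - l)) :
    pgact F (threeCycle F) (aPt F l) ∈ ANSq F := by
  have hl_ne : l ≠ 1 := by
    rintro rfl
    simp at hl
  exact ⟨(1 - l)⁻¹, by rwa [isSquare_inv], pgact_threeCycle_aPt hl_ne⟩

end ThreeCycle

section Squares

variable {F : Type*} [Field F]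

theorem one_sub_sub_one_div_add_one_sq {n : F} (hn : n ≠ -1) :
    1 - ((n - 1) / (n + 1)) ^ 2 = n * (2 / (n + 1)) ^ 2 := by
  have hn' : n + 1 ≠ 0 := by rwa [Ne, add_eq_zero_iff_eq_neg]
  field_simp
  ring

theorem isSquare_mul_sq_iff {a b : F} (hb : b ≠ 0) : IsSquare (a * b ^ 2) ↔ IsSquare a :=
  ⟨fun h => by simpa [hb] using h.div (IsSquare.sq b), fun h => h.mul (IsSquare.sq b)⟩

theorem exists_isSquare_not_isSquare_one_sub (h2 : (2 : F) ≠ 0) {n : F} (hn : ¬ IsSquare n)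
    (hn_neg_one : n ≠ -1) : ∃ l : F, l ≠ 0 ∧ IsSquare l ∧ ¬ IsSquare (1 - l) := by
  have hsub : n - 1 ≠ 0 := sub_ne_zero.mpr fun h => hn (h ▸ IsSquare.one)
  have hadd : n + 1 ≠ 0 := by rwa [Ne, add_eq_zero_iff_eq_neg]
  refine ⟨((n - 1) / (n + 1)) ^ 2, pow_ne_zero 2 (div_ne_zero hsub hadd), IsSquare.sq _, ?_⟩
  rwa [one_sub_sub_one_div_add_one_sq hn_neg_one, isSquare_mul_sq_iff (div_ne_zero h2 hadd)]

theorem ringChar_ne_two_of_odd_card [Fintype F] (hodd : Odd (Fintype.card F)) :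
    ringChar F ≠ 2 := by
  rw [Ne, FiniteField.even_card_iff_char_two, Nat.odd_iff.mp hodd]
  exact one_ne_zero

end Squares

theorem statement12_general (F : Type*) [Field F] (h2 : (2 : F) ≠ 0) {n : F}
    (hn : ¬ IsSquare n) (hn_neg_one : n ≠ -1) :
    ∃ g : SL2 F,
      pgact F g '' {aInfty F, aPt F 0, aPt F 1} = {aInfty F, aPt F 0, aPt F 1} ∧
      ∃ l : F, l ≠ 0 ∧ IsSquare l ∧ pgact F g (aPt F l) ∈ ANSq F := by
  obtain ⟨l, hl_ne, hl_sq, hl_sub⟩ := exists_isSquare_not_isSquare_one_sub h2 hn hn_neg_one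
  exact ⟨threeCycle F, pgact_threeCycle_image F, l, hl_ne, hl_sq,
    pgact_threeCycle_aPt_mem_ANSq hl_sub⟩

/-- Let `q` be an odd prime power, `F = F_q` (formalized: `F` a finite field
of odd cardinality), and suppose `−1` is a square in `F`.  Then the setwise stabilizer of
`{a_∞, a_0, a_1}` in `SL(2,F)` contains an element mapping some element of `A^□` onto an
element of `A^◇`. -/
theorem statement12 (F : Type) [Field F] [Fintype F] (hodd : Odd (Fintype.card F))
    (hsq : IsSquare (-1 : F)) :
    ∃ g : SL2 F,
      pgact F g '' {aInfty F, aPt F 0, aPt F 1} = {aInfty F, aPt F 0, aPt F 1} ∧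
      ∃ l : F, l ≠ 0 ∧ IsSquare l ∧ pgact F g (aPt F l) ∈ ANSq F := by
  obtain ⟨n, hn⟩ := FiniteField.exists_nonsquare (ringChar_ne_two_of_odd_card hodd)
  exact statement12_general F (Ring.two_ne_zero (ringChar_ne_two_of_odd_card hodd)) hn
    fun h => hn (h ▸ hsq)
end
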